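/- For n odd, A_n(p,0) = A_n(0,p), and for n even, A_n(p,0) = (1+p)·A_n(0,p), as polynomial identities in p. -/

import Mathlib

/-!
Conjugating a permutation by the order reversal of `Fin n` turns a descent at position `i` into one
at position `n - i`. For odd `n` this exchanges odd and even descents, so `A_n(p, q) = A_n(q, p)`.

For even `n`, cut a permutation at its maximum. The entries before and after it are independent
uniformly random arrangements, and the position of the maximum is itself a descent unless it is the
last one. Hence the means `f_n = A_n(p, 0) / n!` and `e_n = A_n(0, p) / n!` satisfy, with
`o_k = A_k(0, p) / k! = A_k(p, 0) / k!` for `k` odd,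
`n f_n = (1 + p) o_{n-1} + p ∑ f_k o_l` and `n e_n = o_{n-1} + p ∑ e_k o_l`,
where the sums run over `k + l = n - 1` with `k` even and positive. The recurrences differ only by
the factor `1 + p` in the inhomogeneous term, so `f_n = (1 + p) e_n` by induction.
-/

open Finset

/-- The set of (0-based) descent indices of a permutation of `Fin n`:
`i` is a descent index if `π i > π (i+1)` (so the 1-based descent position is `i+1`). -/
def descentSet {n : ℕ} (π : Equiv.Perm (Fin n)) : Finset ℕ :=
  (Finset.range n).filter
    (fun i => ∃ h : i + 1 < n, π ⟨i + 1, h⟩ < π ⟨i, Nat.lt_of_succ_lt h⟩)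

/-- The number of descents of `π`. -/
def des {n : ℕ} (π : Equiv.Perm (Fin n)) : ℕ := (descentSet π).card

/-- The number of descents of `π` at odd (1-based) positions, i.e. even 0-based indices. -/
def odes {n : ℕ} (π : Equiv.Perm (Fin n)) : ℕ :=
  ((descentSet π).filter (fun i => Even i)).card

/-- The number of descents of `π` at even (1-based) positions, i.e. odd 0-based indices. -/
def edes {n : ℕ} (π : Equiv.Perm (Fin n)) : ℕ :=
  ((descentSet π).filter (fun i => Odd i)).card

/-- The refined Eulerian polynomial `A_n(p,q) = Σ_π p^{odes π} q^{edes π}`. -/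
def refinedEulerian (n : ℕ) (p q : ℝ) : ℝ :=
  ∑ π : Equiv.Perm (Fin n), p ^ odes π * q ^ edes π

/-- The Eulerian polynomial `A_n(q) = Σ_π q^{des π}` as a function. -/
def eulerianEval (n : ℕ) (q : ℝ) : ℝ :=
  ∑ π : Equiv.Perm (Fin n), q ^ des π

/-- The Eulerian polynomial `A_n(q)` as a polynomial. -/
noncomputable def eulerianPolynomial (n : ℕ) : Polynomial ℝ :=
  ∑ π : Equiv.Perm (Fin n), Polynomial.X ^ des π

/-- The Eulerian number `A_{n,k}`: the number of permutations of `[n]` with `k` descents. -/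
def eulerianNumber (n k : ℕ) : ℕ :=
  (Finset.univ.filter (fun π : Equiv.Perm (Fin n) => des π = k)).card

/-- A permutation `a_1 a_2 … a_n` is alternating if `a_1 > a_2 < a_3 > ⋯`. -/
def IsAlternating {n : ℕ} (π : Equiv.Perm (Fin n)) : Prop :=
  ∀ i : ℕ, ∀ h : i + 1 < n,
    (π ⟨i + 1, h⟩ < π ⟨i, Nat.lt_of_succ_lt h⟩ ↔ Even i)

open scoped Classical in
/-- The Euler number `E_n`: the number of alternating permutations of `[n]`. -/
noncomputable def eulerNumber (n : ℕ) : ℕ :=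
  (Finset.univ.filter (fun π : Equiv.Perm (Fin n) => IsAlternating π)).card

/-- `a_{n,k}`: the number of permutations of `[n]` with `k` even descents and no odd descents. -/
def aNum (n k : ℕ) : ℕ :=
  (Finset.univ.filter (fun π : Equiv.Perm (Fin n) => edes π = k ∧ odes π = 0)).card

open scoped Nat

section DescentWeight

variable {M α β : Type*} [CommMonoid M] [LinearOrder α] [LinearOrder β] {n : ℕ}

/-- The product of the weights `b i` over the (0-based) descent indices `i` of the word `f`.
The index `n - 1` has no successor and is never a descent. -/
def descentWeight (b : ℕ → M) (f : Fin n → α) : M :=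
  ∏ i : Fin n, if ∃ h : (i : ℕ) + 1 < n, f ⟨i + 1, h⟩ < f i then b i else 1

theorem descentWeight_strictMono_comp (b : ℕ → M) {g : α → β} (hg : StrictMono g)
    (f : Fin n → α) : descentWeight b (g ∘ f) = descentWeight b f := by
  simp only [descentWeight, Function.comp_apply, hg.lt_iff_lt]

theorem descentWeight_succ (b : ℕ → M) (f : Fin (n + 1) → α) :
    descentWeight b f = ∏ i : Fin n, if f i.succ < f i.castSucc then b i else 1 := by
  rw [descentWeight, Fin.prod_univ_castSucc]
  simp [Fin.succ]

theorem descentWeight_perm (b : ℕ → M) (π : Equiv.Perm (Fin n)) :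
    descentWeight b π = ∏ i ∈ descentSet π, b i := by
  rw [descentSet, prod_filter, prod_range]
  rfl

theorem descentWeight_rev_comp_rev {b c : ℕ → M} (h : ∀ i j, i + j + 2 = n → b i = c j)
    (f : Fin n → Fin n) :
    descentWeight b (Fin.rev ∘ f ∘ Fin.rev) = descentWeight c f := by
  cases n with
  | zero => rfl
  | succ n =>
    rw [descentWeight_succ, descentWeight_succ, ← Equiv.prod_comp Fin.revPerm]
    refine prod_congr rfl fun i _ => ?_
    simp only [Function.comp_apply, Fin.rev_lt_rev, Fin.revPerm_apply, Fin.rev_succ,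
      Fin.rev_castSucc, Fin.rev_rev]
    rw [h i.rev i (by rw [Fin.val_rev]; omega)]

theorem descentWeight_eq_mul_of_max (b : ℕ → M) {k l : ℕ} (f : Fin (k + 1 + l) → α)
    (hf : ∀ i ≠ Fin.castAdd l (Fin.last k), f i < f (Fin.castAdd l (Fin.last k))) :
    descentWeight b f =
      descentWeight b (f ∘ Fin.castAdd l ∘ Fin.castSucc) * (if l = 0 then 1 else b k) *
        descentWeight (fun i => b (k + 1 + i)) (f ∘ Fin.natAdd (k + 1)) := by
  simp only [descentWeight, Fin.prod_univ_add, Fin.prod_univ_castSucc (n := k),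
    Function.comp_apply]
  congr 2
  · refine prod_congr rfl fun i _ => if_congr ⟨fun ⟨h, hlt⟩ => ?_, ?_⟩ rfl rfl
    · rcases Nat.lt_or_ge (i + 1) k with hi | hi
      · exact ⟨hi, hlt⟩
      · have hnext : (⟨i + 1, h⟩ : Fin (k + 1 + l)) = Fin.castAdd l (Fin.last k) :=
          Fin.ext (by simp only [Fin.val_castAdd, Fin.val_last]; omega)
        refine absurd (hnext ▸ hlt) (hf _ ?_).not_gt
        simp only [ne_eq, Fin.ext_iff, Fin.val_castAdd, Fin.val_castSucc, Fin.val_last]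
        omega
    · exact fun ⟨h, hlt⟩ => ⟨by simp only [Fin.val_castAdd, Fin.val_castSucc]; omega, hlt⟩
  · rcases eq_or_ne l 0 with rfl | hl
    · simp
    · have hnext : (Fin.castAdd l (Fin.last k) : ℕ) + 1 < k + 1 + l := by
        simp only [Fin.val_castAdd, Fin.val_last]
        omega
      rw [if_neg hl, if_pos ⟨hnext, hf _ (by simp [Fin.ext_iff])⟩]
      rfl
  · refine funext fun i => if_congr ⟨fun ⟨h, hlt⟩ => ⟨?_, hlt⟩, fun ⟨h, hlt⟩ => ⟨?_, hlt⟩⟩ rfl rfl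
    · rw [Fin.val_natAdd] at h
      omega
    · rw [Fin.val_natAdd]
      omega

end DescentWeight

theorem card_mul_card_perm_apply_eq {α : Type*} [Fintype α] [DecidableEq α] (a b : α) :
    Fintype.card α * #{σ : Equiv.Perm α | σ a = b} = (Fintype.card α)! := by
  have hfiber (c : α) : #{σ : Equiv.Perm α | σ a = c} = #{σ : Equiv.Perm α | σ a = b} :=
    card_equiv (Equiv.mulLeft (Equiv.swap c b)) fun σ => by
      simp [Equiv.swap_apply_eq_iff]
  calc Fintype.card α * #{σ : Equiv.Perm α | σ a = b}
      = ∑ c, #{σ : Equiv.Perm α | σ a = c} := by simp [hfiber]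
    _ = Fintype.card (Equiv.Perm α) := (card_eq_sum_card_fiberwise fun _ _ => mem_univ _).symm
    _ = (Fintype.card α)! := Fintype.card_perm

section FlankPerm

variable {k l : ℕ} (σ : Equiv.Perm (Fin k)) (τ : Equiv.Perm (Fin l))

/-- The permutation of `Fin (k + 1 + l)` that fixes the index `k`, acts as `σ` on the indices
before it and as `τ` on the indices after it. -/
def flankPerm : Equiv.Perm (Fin (k + 1 + l)) :=
  finSumFinEquiv.permCongr ((finSumFinEquiv.permCongr (σ.sumCongr 1)).sumCongr τ)

theorem flankPerm_castAdd_castSucc (i : Fin k) :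
    flankPerm σ τ (Fin.castAdd l i.castSucc) = Fin.castAdd l (σ i).castSucc := by
  simp [flankPerm, Fin.castSucc]

theorem flankPerm_castAdd_last :
    flankPerm σ τ (Fin.castAdd l (Fin.last k)) = Fin.castAdd l (Fin.last k) := by
  have hlast : Fin.last k = Fin.natAdd k (0 : Fin 1) := rfl
  simp [flankPerm, hlast]

theorem flankPerm_natAdd (i : Fin l) :
    flankPerm σ τ (Fin.natAdd (k + 1) i) = Fin.natAdd (k + 1) (τ i) := by
  simp [flankPerm]

end FlankPerm

section DescentSum

variable {R : Type*} [CommSemiring R]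

/-- The total `descentWeight` of the permutations of `Fin n`. -/
def descentSum (b : ℕ → R) (n : ℕ) : R :=
  ∑ σ : Equiv.Perm (Fin n), descentWeight b σ

theorem sum_descentWeight_comp_perm {α : Type*} [LinearOrder α] (b : ℕ → R) {n : ℕ}
    {f : Fin n → α} (hf : Function.Injective f) :
    ∑ σ : Equiv.Perm (Fin n), descentWeight b (f ∘ σ) = descentSum b n := by
  have hsort : StrictMono (f ∘ Tuple.sort f) :=
    (Tuple.monotone_sort f).strictMono_of_injective (hf.comp (Tuple.sort f).injective)
  rw [descentSum, ← Equiv.sum_comp (Equiv.mulLeft (Tuple.sort f))]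
  exact sum_congr rfl fun σ _ => descentWeight_strictMono_comp b hsort σ

theorem sum_descentWeight_mul_flankPerm (b : ℕ → R) {k l : ℕ}
    {π : Equiv.Perm (Fin (k + 1 + l))} (hπ : IsTop (π (Fin.castAdd l (Fin.last k)))) :
    ∑ σ : Equiv.Perm (Fin k), ∑ τ : Equiv.Perm (Fin l), descentWeight b (π * flankPerm σ τ) =
      descentSum b k * (if l = 0 then 1 else b k) * descentSum (fun i => b (k + 1 + i)) l := by
  have hweight (σ : Equiv.Perm (Fin k)) (τ : Equiv.Perm (Fin l)) :
      descentWeight b (π * flankPerm σ τ) =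
        descentWeight b ((π ∘ Fin.castAdd l ∘ Fin.castSucc) ∘ σ) * (if l = 0 then 1 else b k) *
          descentWeight (fun i => b (k + 1 + i)) ((π ∘ Fin.natAdd (k + 1)) ∘ τ) := by
    have hσ : (π * flankPerm σ τ) ∘ Fin.castAdd l ∘ Fin.castSucc =
        (π ∘ Fin.castAdd l ∘ Fin.castSucc) ∘ σ :=
      funext fun i => congrArg π (flankPerm_castAdd_castSucc σ τ i)
    have hτ : (π * flankPerm σ τ) ∘ Fin.natAdd (k + 1) = (π ∘ Fin.natAdd (k + 1)) ∘ τ :=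
      funext fun i => congrArg π (flankPerm_natAdd σ τ i)
    rw [descentWeight_eq_mul_of_max]
    · rw [hσ, hτ]
    · intro i hi
      have hne := (π * flankPerm σ τ).injective.ne hi
      simp only [Equiv.Perm.mul_apply, flankPerm_castAdd_last] at hne ⊢
      exact (hπ _).lt_of_ne hne
  have hleft : Function.Injective (π ∘ Fin.castAdd l ∘ Fin.castSucc) :=
    π.injective.comp ((Fin.castAdd_injective _ _).comp (Fin.castSucc_injective _))
  have hright : Function.Injective (π ∘ Fin.natAdd (k + 1)) :=
    π.injective.comp (Fin.natAdd_injective _ _)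
  simp only [hweight, ← mul_sum, ← sum_mul, sum_descentWeight_comp_perm _ hleft,
    sum_descentWeight_comp_perm _ hright]

-- Right multiplication by `flankPerm σ τ` preserves the fiber, and summing over `σ` and `τ`
-- decouples the two flanks.
theorem factorial_mul_factorial_mul_sum_descentWeight (b : ℕ → R) {k l : ℕ}
    {y : Fin (k + 1 + l)} (hy : IsTop y) :
    (k ! * l ! : R) * ∑ π : Equiv.Perm (Fin (k + 1 + l)) with π (Fin.castAdd l (Fin.last k)) = y,
        descentWeight b π =
      #{π : Equiv.Perm (Fin (k + 1 + l)) | π (Fin.castAdd l (Fin.last k)) = y} *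
        (descentSum b k * (if l = 0 then 1 else b k) *
          descentSum (fun i => b (k + 1 + i)) l) := by
  set fiber : Finset (Equiv.Perm (Fin (k + 1 + l))) := {π | π (Fin.castAdd l (Fin.last k)) = y}
  have hinv (σ : Equiv.Perm (Fin k)) (τ : Equiv.Perm (Fin l)) :
      ∑ π ∈ fiber, descentWeight b (π * flankPerm σ τ) = ∑ π ∈ fiber, descentWeight b π :=
    sum_equiv (Equiv.mulRight (flankPerm σ τ))
      (fun π => by simp [fiber, flankPerm_castAdd_last]) fun _ _ => rfl
  calc (k ! * l ! : R) * ∑ π ∈ fiber, descentWeight b π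
      = ∑ σ : Equiv.Perm (Fin k), ∑ τ : Equiv.Perm (Fin l),
          ∑ π ∈ fiber, descentWeight b (π * flankPerm σ τ) := by
        simp only [hinv, sum_const, card_univ, Fintype.card_perm, Fintype.card_fin, nsmul_eq_mul,
          mul_assoc]
    _ = ∑ π ∈ fiber, ∑ σ : Equiv.Perm (Fin k), ∑ τ : Equiv.Perm (Fin l),
          descentWeight b (π * flankPerm σ τ) := by
        simp only [sum_comm (s := fiber)]
    _ = #fiber * (descentSum b k * (if l = 0 then 1 else b k) *
          descentSum (fun i => b (k + 1 + i)) l) := by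
        rw [sum_congr rfl fun π hπ => sum_descentWeight_mul_flankPerm b
          ((mem_filter.mp hπ).2 ▸ hy), sum_const, nsmul_eq_mul]

theorem descentSum_reflect {b c : ℕ → R} {n : ℕ} (h : ∀ i j, i + j + 2 = n → b i = c j) :
    descentSum b n = descentSum c n := by
  rw [descentSum, ← Equiv.sum_comp (Fin.revPerm.permCongr)]
  exact sum_congr rfl fun σ _ => descentWeight_rev_comp_rev h σ

end DescentSum

section MeanDescentWeight

variable {K : Type*} [Field K]

/-- The mean `descentWeight` of a uniformly random permutation of `Fin n`. -/
def meanDescentWeight (b : ℕ → K) (n : ℕ) : K :=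
  descentSum b n / n !

theorem meanDescentWeight_zero (b : ℕ → K) : meanDescentWeight b 0 = 1 := by
  simp [meanDescentWeight, descentSum, descentWeight]

variable [CharZero K]

theorem mul_sum_descentWeight_div_factorial (b : ℕ → K) {k l n : ℕ} (h : k + 1 + l = n)
    {x y : Fin n} (hx : (x : ℕ) = k) (hy : IsTop y) :
    n * ((∑ π : Equiv.Perm (Fin n) with π x = y, descentWeight b π) / n !) =
      meanDescentWeight b k * (if l = 0 then 1 else b k) *
        meanDescentWeight (fun i => b (k + 1 + i)) l := by
  subst h
  obtain rfl : x = Fin.castAdd l (Fin.last k) := Fin.ext (by simpa using hx)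
  have hsum := factorial_mul_factorial_mul_sum_descentWeight b hy
  have hcard := card_mul_card_perm_apply_eq (Fin.castAdd l (Fin.last k)) y
  rw [Fintype.card_fin] at hcard
  have hk : (k ! : K) ≠ 0 := Nat.cast_ne_zero.mpr k.factorial_ne_zero
  have hl : (l ! : K) ≠ 0 := Nat.cast_ne_zero.mpr l.factorial_ne_zero
  have hn : ((k + 1 + l)! : K) ≠ 0 := Nat.cast_ne_zero.mpr (k + 1 + l).factorial_ne_zero
  rw [← hcard, Nat.cast_mul] at hn ⊢
  rw [meanDescentWeight, meanDescentWeight]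
  have hsize := left_ne_zero_of_mul hn
  have hfiber := right_ne_zero_of_mul hn
  field_simp
  linear_combination hsum

theorem succ_mul_meanDescentWeight_succ (b : ℕ → K) (n : ℕ) :
    (n + 1) * meanDescentWeight b (n + 1) = ∑ x ∈ antidiagonal n,
      meanDescentWeight b x.1 * (if x.2 = 0 then 1 else b x.1) *
        meanDescentWeight (fun i => b (x.1 + 1 + i)) x.2 := by
  have htop : IsTop (Fin.last n) := Fin.le_last
  have hfiber : descentSum b (n + 1) = ∑ x : Fin (n + 1),
      ∑ π : Equiv.Perm (Fin (n + 1)) with π x = Fin.last n, descentWeight b π := by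
    rw [descentSum, ← sum_fiberwise univ fun π : Equiv.Perm (Fin (n + 1)) => π.symm (Fin.last n)]
    simp only [Equiv.symm_apply_eq, @eq_comm _ (Fin.last n)]
  rw [meanDescentWeight, hfiber, sum_div, mul_sum, Nat.sum_antidiagonal_eq_sum_range_succ_mk,
    sum_range]
  refine sum_congr rfl fun x _ => ?_
  rw [← mul_sum_descentWeight_div_factorial b (by omega) rfl htop, Nat.cast_succ]

theorem succ_mul_meanDescentWeight_succ_eq_add (b : ℕ → K) (n : ℕ) :
    (n + 1) * meanDescentWeight b (n + 1) = (1 - b n) * meanDescentWeight b n +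
      ∑ x ∈ antidiagonal n, meanDescentWeight b x.1 * b x.1 *
        meanDescentWeight (fun i => b (x.1 + 1 + i)) x.2 := by
  rw [succ_mul_meanDescentWeight_succ, ← sub_eq_iff_eq_add, ← sum_sub_distrib,
    sum_eq_single (n, 0)]
  · rw [meanDescentWeight_zero, if_pos rfl]
    ring
  · rintro ⟨k, l⟩ hx hne
    have hl : l ≠ 0 := by
      rintro rfl
      exact hne (by simpa using hx)
    simp [hl]
  · simp

end MeanDescentWeight

section Alternating

variable {R : Type*}

/-- The weight sequence `p, q, p, q, …`; since indices are 0-based, `p` marks the descents at odd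
positions and `q` those at even positions. -/
def alternating (p q : R) (i : ℕ) : R := if Even i then p else q

theorem alternating_even (p q : R) {i : ℕ} (hi : Even i) : alternating p q i = p := if_pos hi

theorem alternating_odd (p q : R) {i : ℕ} (hi : Odd i) : alternating p q i = q :=
  if_neg (Nat.not_even_iff_odd.mpr hi)

theorem alternating_even_add_one_add (p q : R) {k : ℕ} (hk : Even k) :
    (fun i => alternating p q (k + 1 + i)) = alternating q p := by
  funext i
  simp only [alternating, Nat.even_add, Nat.even_add_one, hk, not_true, false_iff, ite_not]

theorem alternating_odd_add_one_add (p q : R) {k : ℕ} (hk : Odd k) :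
    (fun i => alternating p q (k + 1 + i)) = alternating p q := by
  funext i
  simp [alternating, Nat.even_add, Nat.not_even_iff_odd.mpr hk]

variable {K : Type*} [Field K]

theorem meanDescentWeight_alternating_comm_of_odd (p q : K) {n : ℕ} (hn : Odd n) :
    meanDescentWeight (alternating p q) n = meanDescentWeight (alternating q p) n := by
  rw [meanDescentWeight, meanDescentWeight, descentSum_reflect]
  intro i j hij
  rcases Nat.even_or_odd i with hi | hi
  · rw [alternating_even _ _ hi, alternating_odd _ _ (by grind)]
  · rw [alternating_odd _ _ hi, alternating_even _ _ (by grind)]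

variable [CharZero K]

theorem succ_mul_meanDescentWeight_alternating_zero_right (p : K) {m : ℕ} (hm : Odd m) :
    (m + 1) * meanDescentWeight (alternating p 0) (m + 1) =
      meanDescentWeight (alternating p 0) m +
        p * ∑ x ∈ antidiagonal m with Even x.1,
          meanDescentWeight (alternating p 0) x.1 * meanDescentWeight (alternating 0 p) x.2 := by
  rw [succ_mul_meanDescentWeight_succ_eq_add, alternating_odd _ _ hm, sub_zero, one_mul, sum_filter,
    mul_sum]
  congr 1
  refine sum_congr rfl fun ⟨k, l⟩ _ => ?_
  rcases Nat.even_or_odd k with hk | hk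
  · rw [if_pos hk, alternating_even _ _ hk, alternating_even_add_one_add _ _ hk]
    ring
  · rw [if_neg (Nat.not_even_iff_odd.mpr hk), alternating_odd _ _ hk]
    ring

theorem succ_mul_meanDescentWeight_alternating_zero_left (p : K) {m : ℕ} (hm : Odd m) :
    (m + 1) * meanDescentWeight (alternating 0 p) (m + 1) =
      (1 - p) * meanDescentWeight (alternating 0 p) m +
        p * ∑ x ∈ antidiagonal m with Even x.1,
          meanDescentWeight (alternating 0 p) x.1 * meanDescentWeight (alternating 0 p) x.2 := by
  rw [succ_mul_meanDescentWeight_succ_eq_add, alternating_odd _ _ hm, ← Nat.sum_antidiagonal_swap,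
    sum_filter, mul_sum]
  congr 1
  refine sum_congr rfl fun ⟨l, k⟩ hx => ?_
  have hadd : l + k = m := mem_antidiagonal.mp hx
  simp only [Prod.swap_prod_mk]
  rcases Nat.even_or_odd l with hl | hl
  · have hk : Odd k := by grind
    rw [if_pos hl, alternating_odd _ _ hk, alternating_odd_add_one_add _ _ hk]
    ring
  · have hk : Even k := by grind
    rw [if_neg (Nat.not_even_iff_odd.mpr hl), alternating_even _ _ hk]
    ring

-- Both means are `1` at `n = 0`; the correction there lets the induction pass through a
-- permutation whose maximum comes first.
theorem meanDescentWeight_alternating_zero_right_of_even (p : K) {n : ℕ} (hn : Even n) :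
    meanDescentWeight (alternating p 0) n =
      (1 + p) * meanDescentWeight (alternating 0 p) n - if n = 0 then p else 0 := by
  induction n using Nat.strong_induction_on with
  | _ n ih =>
  rcases n with _ | m
  · simp [meanDescentWeight_zero]
  have hm : Odd m := by grind
  set e := meanDescentWeight (alternating 0 p)
  have hfirst : ∑ x ∈ antidiagonal m with Even x.1, (if x.1 = 0 then p else 0) * e x.2 =
      p * e m := by
    rw [sum_eq_single_of_mem (0, m) (by simp), if_pos rfl]
    rintro ⟨k, l⟩ hx hne
    rw [if_neg, zero_mul]
    rintro (rfl : k = 0)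
    exact hne (by simpa using (mem_filter.mp hx).1)
  have hsum : ∑ x ∈ antidiagonal m with Even x.1,
      meanDescentWeight (alternating p 0) x.1 * e x.2 =
        (1 + p) * ∑ x ∈ antidiagonal m with Even x.1, e x.1 * e x.2 - p * e m := by
    rw [← hfirst, mul_sum, ← sum_sub_distrib]
    refine sum_congr rfl fun x hx => ?_
    obtain ⟨hmem, heven⟩ := mem_filter.mp hx
    have hlt : x.1 < m + 1 := by
      have := mem_antidiagonal.mp hmem
      omega
    rw [ih x.1 hlt heven]
    ring
  have hright := succ_mul_meanDescentWeight_alternating_zero_right p hm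
  rw [hsum, meanDescentWeight_alternating_comm_of_odd p 0 hm] at hright
  have hleft := succ_mul_meanDescentWeight_alternating_zero_left p hm
  refine mul_left_cancel₀ (Nat.cast_add_one_ne_zero m : (m + 1 : K) ≠ 0) ?_
  rw [if_neg m.succ_ne_zero]
  linear_combination hright - (1 + p) * hleft

end Alternating

theorem refinedEulerian_eq_factorial_mul (n : ℕ) (p q : ℝ) :
    refinedEulerian n p q = n ! * meanDescentWeight (alternating p q) n := by
  rw [meanDescentWeight, mul_div_cancel₀ _ (Nat.cast_ne_zero.mpr n.factorial_ne_zero),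
    descentSum, refinedEulerian]
  refine sum_congr rfl fun π _ => ?_
  simp only [descentWeight_perm, alternating, prod_ite, prod_const, odes, edes,
    Nat.not_even_iff_odd]

/-- For n odd, A_n(p,0) = A_n(0,p); for n even, A_n(p,0) = (1+p)A_n(0,p). -/
theorem refinedEulerian_p_zero_q_zero (n : ℕ) (hn : 1 ≤ n) (p : ℝ) :
    (Odd n → refinedEulerian n p 0 = refinedEulerian n 0 p) ∧
    (Even n → refinedEulerian n p 0 = (1 + p) * refinedEulerian n 0 p) := by
  simp only [refinedEulerian_eq_factorial_mul]
  constructor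
  · intro hodd
    rw [meanDescentWeight_alternating_comm_of_odd p 0 hodd]
  · intro heven
    rw [meanDescentWeight_alternating_zero_right_of_even p heven, if_neg (by omega)]
    ring
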